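/- Let n, k ≥ 1, N = n+k ≥ 3. Let y ∈ ℂ^k have nonzero, pairwise distinct entries with y_1^N = y_2^N = ⋯ = y_k^N, and set q = (−1)^{k−1} y_1^N. Then, with the operators u_1,…,u_N on the complex vector space with basis W_{k,N} defined using this complex number q, the vector b̃(y) = Σ_{λ ∈ 𝔓_{≤k,n}} s_λ(y_1^{−1},…,y_k^{−1})·w(λ) is a simultaneous eigenvector: e_r(𝒰)·b̃(y) = e_r(y)·b̃(y) and h_r(𝒰)·b̃(y) = h_r(y)·b̃(y) for every 1 ≤ r ≤ N−1. -/

import Mathlib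

noncomputable section

open scoped BigOperators

/-- `𝔓_{≤r,c}`: partitions with at most `r` parts, each part at most `c`. -/
abbrev PartBox (r c : ℕ) :=
  {f : Fin r → Fin (c + 1) // ∀ i j : Fin r, i ≤ j → (f j : ℕ) ≤ (f i : ℕ)}

/-- The parts of a partition, as natural numbers. -/
def partVal {r c : ℕ} (σ : PartBox r c) (i : Fin r) : ℕ := (σ.1 i : ℕ)

/-- `|σ|`, the number of boxes. -/
def partSum {r c : ℕ} (σ : PartBox r c) : ℕ := ∑ i, partVal σ i

/-- A tuple of parts, padded by zeros. -/
def padded {r : ℕ} (f : Fin r → ℕ) (t : ℕ) : ℕ := if h : t < r then f ⟨t, h⟩ else 0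

/-- The transpose partition: `(transpGen μ c) j = μ^t_{j+1} = #{i | μ_i ≥ j+1}`. -/
def transpGen {r : ℕ} (μ : Fin r → ℕ) (c : ℕ) : Fin c → ℕ :=
  fun j => (Finset.univ.filter fun i : Fin r => (j : ℕ) + 1 ≤ μ i).card

/-- `I^{(m)}(τ)_j = (m+1)/2 + τ_{m+1-j} - (m+1-j)` (1-based `j`), as a rational number. -/
def Imap (m : ℕ) (τ : Fin m → ℕ) (j : Fin m) : ℚ :=
  ((m : ℚ) + 1) / 2 + (τ j.rev : ℚ) - ((m : ℚ) - (j : ℚ))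

/-- `ζ^t = exp(2πι t/N)` for rational exponents `t`. -/
def zeta (N : ℕ) (t : ℚ) : ℂ :=
  Complex.exp (2 * Real.pi * Complex.I * (t : ℂ) / (N : ℂ))

/-- Elementary symmetric polynomial `e_r(x)` of a tuple of complex numbers. -/
def eC {m : ℕ} (x : Fin m → ℂ) (r : ℤ) : ℂ :=
  if 0 ≤ r then ∑ I ∈ Finset.powersetCard r.toNat (Finset.univ : Finset (Fin m)), ∏ i ∈ I, x i
  else 0

/-- Complete homogeneous symmetric polynomial `h_r(x)` of a tuple of complex numbers. -/
def hC {m : ℕ} (x : Fin m → ℂ) (r : ℤ) : ℂ :=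
  if 0 ≤ r then
    ∑ p ∈ (Fintype.piFinset fun _ : Fin m => Finset.range (r.toNat + 1)).filter
        (fun p => ∑ i, p i = r.toNat),
      ∏ i, x i ^ p i
  else 0

/-- The Schur polynomial `s_λ(x) = det(h_{λ_i-i+j}(x))_{1 ≤ i,j ≤ m}`. -/
def schurC {m : ℕ} (x : Fin m → ℂ) (lam : Fin m → ℕ) : ℂ :=
  (Matrix.of fun i j : Fin m => hC x ((lam i : ℤ) - (i : ℕ) + (j : ℕ))).det

/-- A canonical "gap" of a proper subset `I ⊊ ℤ/Nℤ`. -/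
def zgap {N : ℕ} [NeZero N] (I : Finset (ZMod N)) : ZMod N :=
  if h : ((Finset.univ \ I).image ZMod.val).Nonempty then
    ((((Finset.univ \ I).image ZMod.val).min' h : ℕ) : ZMod N)
  else 0

/-- Cyclically increasing ordered product: `u_i` stands to the left of `u_{i+1}`. -/
def cycProdAsc {N : ℕ} [NeZero N] {A : Type*} [Monoid A] (u : ZMod N → A)
    (I : Finset (ZMod N)) : A :=
  ((List.range N).map fun t =>
    if zgap I + 1 + (t : ZMod N) ∈ I then u (zgap I + 1 + (t : ZMod N)) else 1).prod

/-- Cyclically decreasing ordered product: `u_{i+1}` stands to the left of `u_i`. -/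
def cycProdDesc {N : ℕ} [NeZero N] {A : Type*} [Monoid A] (u : ZMod N → A)
    (I : Finset (ZMod N)) : A :=
  ((List.range N).map fun t =>
    if zgap I - 1 - (t : ZMod N) ∈ I then u (zgap I - 1 - (t : ZMod N)) else 1).prod

/-- The determinant of a square matrix over a (possibly noncommutative) ring, expanded via
the Leibniz formula. -/
def ncDet {A : Type*} [Ring A] {r : ℕ} (M : Fin r → Fin r → A) : A :=
  ∑ σ : Equiv.Perm (Fin r),
    ((Equiv.Perm.sign σ : ℤ) : A) * ((List.finRange r).map fun i => M (σ i) i).prod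

/-- The free `R`-module with basis the set of 01-words of length `N` (a word is a function
`ℤ/Nℤ → Bool`, the 1-based position `ℓ` being encoded as `ℓ mod N`). -/
abbrev WSp (R : Type*) [CommRing R] (N : ℕ) := (ZMod N → Bool) →₀ R

/-- The 01-word `w(λ) ∈ W_{k,N}` of a partition `λ ∈ 𝔓_{≤k,n}`: the 1-letters occupy the
positions `ℓ_i = λ_{k+1-i} + i`, `i = 1, …, k`. -/
def wordOf (N k : ℕ) (lam : Fin k → ℕ) : ZMod N → Bool :=
  fun p => decide (∃ i : Fin k, p = ((lam i.rev + (i : ℕ) + 1 : ℕ) : ZMod N))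

/-- The hopping operator `u_c` (for `c = i mod N` this is the operator `u_i`, `1 ≤ i ≤ N`):
it moves a particle from position `c` to position `c+1` when possible (sends the word to 0
otherwise), with the extra factor `q` for `u_N` (i.e. `c = 0`). -/
def uOp (R : Type*) [CommRing R] (N : ℕ) [NeZero N] (q : R) (c : ZMod N) :
    Module.End R (WSp R N) :=
  Finsupp.lift (WSp R N) R (ZMod N → Bool) fun w =>
    if w c = true ∧ w (c + 1) = false then
      Finsupp.single (w ∘ (Equiv.swap c (c + 1))) (if c = 0 then q else 1)
    else 0

/-- The noncommutative elementary symmetric polynomials `e_t(𝒰)`, with the conventions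
`e_0 = id` and `e_t = 0` for `t < 0`. -/
def eUInt (R : Type*) [CommRing R] (N : ℕ) [NeZero N] (q : R) (t : ℤ) :
    Module.End R (WSp R N) :=
  if t = 0 then 1
  else if 1 ≤ t ∧ t ≤ (N : ℤ) - 1 then
    ∑ I ∈ Finset.powersetCard t.toNat (Finset.univ : Finset (ZMod N)),
      cycProdAsc (uOp R N q) I
  else 0

/-- The noncommutative complete symmetric polynomial `h_r(𝒰)`. -/
def hUOp (R : Type*) [CommRing R] (N : ℕ) [NeZero N] (q : R) (r : ℕ) :
    Module.End R (WSp R N) :=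
  ∑ I ∈ Finset.powersetCard r (Finset.univ : Finset (ZMod N)), cycProdDesc (uOp R N q) I

/-- The noncommutative Schur polynomial
`s_λ(𝒰) = det(e_{λ^t_i - i + j}(𝒰))_{1 ≤ i,j ≤ λ_1}` of a partition given by its parts. -/
def sUOp (R : Type*) [CommRing R] (N : ℕ) [NeZero N] (q : R) {r : ℕ} (lam : Fin r → ℕ) :
    Module.End R (WSp R N) :=
  ncDet fun i j : Fin (padded lam 0) =>
    eUInt R N q ((transpGen lam (padded lam 0) i : ℤ) - ((i : ℕ) : ℤ) + ((j : ℕ) : ℤ))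

/-- The `R`-bilinear pairing on the word space making the basis of words orthonormal. -/
def pairW {R : Type*} [CommRing R] {N : ℕ} [NeZero N] (f g : WSp R N) : R :=
  ∑ w : ZMod N → Bool, f w * g w

/-- The free-fermion Bethe vector `b̃(y) = Σ_{λ ∈ 𝔓_{≤k,n}} s_λ(y₁⁻¹, …, y_k⁻¹) · w(λ)`. -/
def fermiBethe (n k : ℕ) [NeZero (n + k)] (y : Fin k → ℂ) : WSp ℂ (n + k) :=
  ∑ σ : PartBox k n,
    Finsupp.single (wordOf (n + k) k (partVal σ)) (schurC (fun i => (y i)⁻¹) (partVal σ))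

/-!
Up to the common factor `weylDenominator y⁻¹`, the coefficient of `b̃(y)` at the word with particles
at the positions `l` is the alternant `det (y_i ^ (-l_j))`, by the bialternant formula. The
coefficient of `e_r(𝒰) b̃(y)` at this word sums the coefficients of the words in which `r` of the
particles stand one step further back. Moves that would put two particles on one site contribute
alternants with two proportional columns, so the sum may be extended over all choices of `r`
particles; a particle passing the boundary is accounted for by `q`, thanks to the Bethe equations
`y_i ^ N = (-1) ^ (k - 1) q`. Summing over the choices multiplies each Leibniz term of the alternant
by `e_r(y)`.

The statement for `h_r` follows, since operators and symmetric functions both satisfy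
`∑_p (-1) ^ p e_p h_{r-p} = 0` for `1 ≤ r < N`.
-/

section OrderedProducts

theorem prod_map_eq_of_perm_of_pairwise {α M : Type*} [Monoid M] {u : α → M} {r : α → α → Prop}
    (hu : ∀ a b, r a b → r b a → Commute (u a) (u b)) {L L' : List α} (h : L.Perm L')
    (hL : L.Pairwise r) (hL' : L'.Pairwise r) : (L.map u).prod = (L'.map u).prod := by
  induction L generalizing L' with
  | nil => rw [List.nil_perm.1 h]
  | cons a L ih =>
    obtain ⟨L₁, L₂, rfl⟩ := List.append_of_mem (h.subset List.mem_cons_self)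
    have hperm : L.Perm (L₁ ++ L₂) := (h.trans List.perm_middle).cons_inv
    have ha : ∀ b ∈ L₁, Commute (u b) (u a) := fun b hb =>
      hu b a ((List.pairwise_append.1 hL').2.2 b hb a List.mem_cons_self)
        (List.rel_of_pairwise_cons hL (hperm.mem_iff.2 (List.mem_append_left _ hb)))
    have hcomm : Commute (L₁.map u).prod (u a) :=
      Commute.list_prod_left _ _ fun x hx => by
        obtain ⟨b, hb, rfl⟩ := List.mem_map.1 hx
        exact ha b hb
    have hsub : (L₁ ++ L₂).Sublist (L₁ ++ a :: L₂) :=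
      (List.sublist_cons_self a L₂).append_left L₁
    have := ih hperm hL.of_cons (hL'.sublist hsub)
    simp only [List.map_cons, List.prod_cons, List.map_append, List.prod_append] at this ⊢
    rw [this, ← mul_assoc, ← mul_assoc, hcomm.eq]

theorem prod_map_ite_eq_prod_filter {α β M : Type*} [Monoid M] (u : β → M) (f : α → β)
    (p : β → Prop) [DecidablePred p] (l : List α) :
    (l.map fun t => if p (f t) then u (f t) else 1).prod =
      (((l.map f).filter (p ·)).map u).prod := by
  induction l with
  | nil => rfl
  | cons a l ih => by_cases h : p (f a) <;> simp [h, ih]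

section CyclicList

variable {N : ℕ}

theorem map_natCast_bind (l : List ℕ) :
    (do let a ← l; pure (a : ZMod N) : List (ZMod N)) = l.map (Nat.cast : ℕ → ZMod N) := by
  simp [List.map_eq_flatMap]

/-- The cyclic interval `ℤ/Nℤ` listed increasingly from the successor of `g` up to `g`. -/
def cyclicList (g : ZMod N) : List (ZMod N) :=
  (List.range N).map fun t : ℕ => g + 1 + (t : ZMod N)

theorem natCast_zmod_injOn_Iio : Set.InjOn (Nat.cast : ℕ → ZMod N) (Set.Iio N) :=
  fun a ha b hb hab => by
    rwa [ZMod.natCast_eq_natCast_iff', Nat.mod_eq_of_lt ha, Nat.mod_eq_of_lt hb] at hab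

theorem nodup_cyclicList (g : ZMod N) : (cyclicList g).Nodup := by
  refine List.Nodup.map_on (fun a ha b hb hab => ?_) List.nodup_range
  exact natCast_zmod_injOn_Iio (List.mem_range.1 ha) (List.mem_range.1 hb) (add_left_cancel hab)

theorem reverse_cyclicList (g : ZMod N) :
    (cyclicList g).reverse = (List.range N).map fun t : ℕ => g - (t : ZMod N) := by
  refine List.ext_getElem (by simp [cyclicList]) fun i hi _ => ?_
  have hi' : i < N := by simpa [cyclicList] using hi
  have hcast : ((N - 1 - i : ℕ) : ZMod N) = -1 - i := by
    rw [Nat.sub_sub, Nat.cast_sub (by omega)]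
    simp [sub_eq_add_neg, add_comm]
  simp only [cyclicList, List.getElem_reverse, List.getElem_map, List.getElem_range,
    List.length_map, List.length_range, hcast]
  ring

theorem mem_cyclicList [NeZero N] (g c : ZMod N) : c ∈ cyclicList g :=
  List.mem_map.2 ⟨(c - (g + 1)).val, List.mem_range.2 (ZMod.val_lt _), by simp⟩

end CyclicList

variable {N : ℕ} [NeZero N] {I K : Finset (ZMod N)} {c : ZMod N}

theorem zgap_notMem (hI : I ≠ Finset.univ) : zgap I ∉ I := by
  have hne : ((Finset.univ \ I).image ZMod.val).Nonempty := by
    rw [Finset.image_nonempty, Finset.sdiff_nonempty]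
    exact fun h => hI (Finset.univ_subset_iff.1 h)
  obtain ⟨a, ha, hval⟩ := Finset.mem_image.1 (Finset.min'_mem _ hne)
  rw [zgap, dif_pos hne, ← hval, ZMod.natCast_zmod_val]
  exact (Finset.mem_sdiff.1 ha).2

/-- The elements of a proper subset `I` of `ℤ/Nℤ`, listed so that `i` precedes `i + 1`. -/
def ascList (I : Finset (ZMod N)) : List (ZMod N) := (cyclicList (zgap I)).filter (· ∈ I)

theorem mem_ascList : c ∈ ascList I ↔ c ∈ I := by
  simp [ascList, mem_cyclicList]

theorem nodup_ascList (I : Finset (ZMod N)) : (ascList I).Nodup :=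
  (nodup_cyclicList _).filter _

theorem pairwise_ascList (hI : I ≠ Finset.univ) : (ascList I).Pairwise fun a b => a ≠ b + 1 := by
  have hg := zgap_notMem hI
  rw [ascList, cyclicList, List.pairwise_filter, List.pairwise_map]
  refine List.pairwise_lt_range.imp_of_mem fun {s t} hs ht hst _ htI hsucc => ?_
  rw [List.mem_range] at hs ht
  have hcast : (s : ZMod N) = (t + 1 : ℕ) := by
    push_cast
    linear_combination hsucc
  rcases (Nat.succ_le_of_lt ht).lt_or_eq with hlt | rfl
  · exact absurd (natCast_zmod_injOn_Iio hs hlt hcast) (by omega)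
  · simp only [decide_eq_true_eq] at htI
    refine hg ?_
    have hgap : zgap I + 1 + (t : ZMod (t + 1)) = zgap I := by
      linear_combination (by exact_mod_cast ZMod.natCast_self (t + 1) : (t : ZMod (t + 1)) + 1 = 0)
    rwa [hgap] at htI

section Products

variable {A : Type*} [Monoid A] (u : ZMod N → A)

theorem cycProdAsc_eq_prod_ascList (I : Finset (ZMod N)) :
    cycProdAsc u I = ((ascList I).map u).prod := by
  simp only [cycProdAsc, map_natCast_bind]
  rw [prod_map_ite_eq_prod_filter u (fun t => zgap I + 1 + t) (· ∈ I), List.map_map]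
  rfl

theorem reverse_ascList (hI : I ≠ Finset.univ) :
    (ascList I).reverse =
      ((List.range N).map fun t : ℕ => zgap I - 1 - (t : ZMod N)).filter (· ∈ I) := by
  have hg := zgap_notMem hI
  rw [ascList, ← List.filter_reverse, reverse_cyclicList]
  obtain ⟨M, rfl⟩ := Nat.exists_eq_succ_of_ne_zero (NeZero.ne N)
  conv_lhs => rw [List.range_succ_eq_map]
  conv_rhs => rw [List.range_succ]
  simp [hg, Function.comp_def, sub_sub, add_comm]

theorem cycProdDesc_eq_prod_reverse_ascList (hI : I ≠ Finset.univ) :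
    cycProdDesc u I = ((ascList I).reverse.map u).prod := by
  simp only [cycProdDesc, map_natCast_bind]
  rw [prod_map_ite_eq_prod_filter u (fun t => zgap I - 1 - t) (· ∈ I), List.map_map,
    reverse_ascList hI]
  rfl

theorem ascList_insert_perm (hc : c ∉ I) : (ascList (insert c I)).Perm (ascList I ++ [c]) := by
  refine (List.perm_ext_iff_of_nodup (nodup_ascList _) ?_).2 fun a => by simp [mem_ascList, or_comm]
  simpa [List.nodup_append, nodup_ascList, mem_ascList] using
    fun a (ha : a ∈ I) (h : a = c) => hc (h ▸ ha)

theorem pairwise_ascList_append (hI : insert c I ≠ Finset.univ) (hc : c + 1 ∉ I) :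
    (ascList I ++ [c]).Pairwise fun a b => a ≠ b + 1 := by
  have hI' : I ≠ Finset.univ := fun h => hI (by simp [h])
  refine List.pairwise_append.2 ⟨pairwise_ascList hI', List.pairwise_singleton _ _, ?_⟩
  simp only [mem_ascList, List.mem_singleton]
  rintro a ha _ rfl rfl
  exact hc ha

variable {u} (hu : ∀ a b, a ≠ b + 1 → b ≠ a + 1 → Commute (u a) (u b))
include hu

theorem cycProdAsc_insert (hc : c ∉ I) (hc' : c + 1 ∉ I) (hI : insert c I ≠ Finset.univ) :
    cycProdAsc u (insert c I) = cycProdAsc u I * u c := by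
  rw [cycProdAsc_eq_prod_ascList, cycProdAsc_eq_prod_ascList,
    prod_map_eq_of_perm_of_pairwise hu (ascList_insert_perm hc) (pairwise_ascList hI)
      (pairwise_ascList_append hI hc')]
  simp

theorem cycProdDesc_insert (hc : c ∉ I) (hc' : c + 1 ∉ I) (hI : insert c I ≠ Finset.univ) :
    cycProdDesc u (insert c I) = u c * cycProdDesc u I := by
  have hI' : I ≠ Finset.univ := fun h => hI (by simp [h])
  have hperm := ((List.reverse_perm _).trans (ascList_insert_perm hc)).trans
    (List.reverse_perm _).symm
  rw [cycProdDesc_eq_prod_reverse_ascList u hI, cycProdDesc_eq_prod_reverse_ascList u hI',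
    prod_map_eq_of_perm_of_pairwise (fun a b hab hba => hu a b hba hab) hperm
      (List.pairwise_reverse.2 (pairwise_ascList hI))
      (List.pairwise_reverse.2 (pairwise_ascList_append hI hc'))]
  simp

end Products

@[simp]
theorem cycProdAsc_empty {A : Type*} [Monoid A] (u : ZMod N → A) : cycProdAsc u ∅ = 1 := by
  simp [cycProdAsc]

@[simp]
theorem cycProdDesc_empty {A : Type*} [Monoid A] (u : ZMod N → A) : cycProdDesc u ∅ = 1 := by
  simp [cycProdDesc]

theorem exists_mem_add_one_notMem (hK : K.Nonempty) (hK' : K ≠ Finset.univ) :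
    ∃ c ∈ K, c + 1 ∉ K := by
  by_contra! hsucc
  obtain ⟨c, hc⟩ := hK
  have hmem (t : ℕ) : c + t ∈ K := by
    induction t with
    | zero => simpa
    | succ t ih => simpa [add_assoc] using hsucc _ ih
  exact hK' (Finset.eq_univ_iff_forall.2 fun b => by simpa using hmem (b - c).val)

@[elab_as_elim]
theorem proper_subset_induction {P : Finset (ZMod N) → Prop} (hI : I ≠ Finset.univ) (empty : P ∅)
    (insert : ∀ c I, c ∉ I → c + 1 ∉ insert c I → insert c I ≠ Finset.univ → P I →
      P (insert c I)) : P I := by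
  induction hn : I.card generalizing I with
  | zero => rwa [Finset.card_eq_zero.1 hn]
  | succ n ih =>
    obtain ⟨c, hc, hc'⟩ := exists_mem_add_one_notMem (Finset.card_pos.1 (by omega)) hI
    have hins := Finset.insert_erase hc
    rw [← hins]
    refine insert c _ (Finset.notMem_erase c I) (by rwa [hins]) (by rwa [hins]) (ih ?_ ?_)
    · exact fun h => Finset.notMem_erase c I (h ▸ Finset.mem_univ c)
    · rw [Finset.card_erase_of_mem hc, hn, Nat.add_sub_cancel]

end OrderedProducts

section NoncommutativeDuality

variable {N : ℕ} [NeZero N] {I J : Finset (ZMod N)} {c : ZMod N} {A : Type*}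

theorem cycProdAsc_erase_mul_cycProdDesc_insert [Monoid A] {u : ZMod N → A}
    (hu : ∀ a b, a ≠ b + 1 → b ≠ a + 1 → Commute (u a) (u b))
    (hcI : c ∈ I) (hcJ : c ∉ J) (hcI' : c + 1 ∉ I) (hcJ' : c + 1 ∉ J) :
    cycProdAsc u (I.erase c) * cycProdDesc u (insert c J) = cycProdAsc u I * cycProdDesc u J := by
  have hI : insert c (I.erase c) ≠ Finset.univ := by
    rw [Finset.insert_erase hcI]
    exact fun h => hcI' (h ▸ Finset.mem_univ _)
  have hJ : insert c J ≠ Finset.univ := fun h =>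
    (Finset.mem_insert.1 (h ▸ Finset.mem_univ (c + 1))).elim (fun hc => hcI' (by rwa [hc])) hcJ'
  rw [cycProdDesc_insert hu hcJ hcJ' hJ, ← mul_assoc,
    ← cycProdAsc_insert hu (Finset.notMem_erase c I) (mt Finset.mem_of_mem_erase hcI') hI,
    Finset.insert_erase hcI]

theorem cycProdAsc_mul_cycProdDesc_eq_zero [MonoidWithZero A] {u : ZMod N → A}
    (hu : ∀ a b, a ≠ b + 1 → b ≠ a + 1 → Commute (u a) (u b)) (hsq : ∀ a, u a * u a = 0)
    (hcI : c ∈ I) (hcJ : c ∈ J) (hcI' : c + 1 ∉ I) (hcJ' : c + 1 ∉ J) :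
    cycProdAsc u I * cycProdDesc u J = 0 := by
  have hI : insert c (I.erase c) ≠ Finset.univ := by
    rw [Finset.insert_erase hcI]
    exact fun h => hcI' (h ▸ Finset.mem_univ _)
  have hJ : insert c (J.erase c) ≠ Finset.univ := by
    rw [Finset.insert_erase hcJ]
    exact fun h => hcJ' (h ▸ Finset.mem_univ _)
  rw [← Finset.insert_erase hcI, ← Finset.insert_erase hcJ,
    cycProdAsc_insert hu (Finset.notMem_erase c I) (mt Finset.mem_of_mem_erase hcI') hI,
    cycProdDesc_insert hu (Finset.notMem_erase c J) (mt Finset.mem_of_mem_erase hcJ') hJ,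
    mul_assoc, ← mul_assoc (u c), hsq, zero_mul, mul_zero]

variable [Ring A] {u : ZMod N → A}
  (hu : ∀ a b, a ≠ b + 1 → b ≠ a + 1 → Commute (u a) (u b)) (hsq : ∀ a, u a * u a = 0)
include hu hsq

/-- A letter `c ∈ K` with `c + 1 ∉ K` can be moved from the end of the first product to the start of
the second one; this cancels the terms in which `c` occurs once, and the others vanish. -/
theorem sum_neg_one_pow_cycProdAsc_mul_cycProdDesc_of_union_eq {K : Finset (ZMod N)}
    (hK : K.Nonempty) (hK' : K ≠ Finset.univ) (r : ℕ) :
    ∑ p : Finset (ZMod N) × Finset (ZMod N) with p.1 ∪ p.2 = K ∧ p.1.card + p.2.card = r,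
      (-1) ^ p.1.card * (cycProdAsc u p.1 * cycProdDesc u p.2) = 0 := by
  obtain ⟨c, hc, hc'⟩ := exists_mem_add_one_notMem hK hK'
  rw [← Finset.sum_filter_add_sum_filter_not _ fun p => c ∈ p.1, add_eq_zero_iff_eq_neg,
    ← Finset.sum_filter_of_ne (p := fun p => c ∉ p.2), ← Finset.sum_neg_distrib]
  · refine Finset.sum_nbij' (fun p => (p.1.erase c, insert c p.2))
      (fun p => (insert c p.1, p.2.erase c)) ?_ ?_ ?_ ?_ ?_
    · simp only [Finset.mem_filter, Finset.mem_univ, true_and]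
      grind
    · simp only [Finset.mem_filter, Finset.mem_univ, true_and]
      grind
    · rintro p hp
      simp only [Finset.mem_filter] at hp
      rw [Finset.insert_erase hp.1.2, Finset.erase_insert hp.2]
    · rintro p hp
      simp only [Finset.mem_filter, Finset.mem_univ, true_and] at hp
      have hcp : c ∈ p.2 := (Finset.mem_union.1 (hp.1.1 ▸ hc)).resolve_left hp.2
      rw [Finset.insert_erase hcp, Finset.erase_insert hp.2]
    · rintro ⟨I, J⟩ hp
      simp only [Finset.mem_filter, Finset.mem_univ, true_and] at hp
      obtain ⟨⟨⟨rfl, -⟩, hI⟩, hJ⟩ := hp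
      rw [cycProdAsc_erase_mul_cycProdDesc_insert hu hI hJ
        (fun h => hc' (Finset.mem_union_left _ h)) (fun h => hc' (Finset.mem_union_right _ h)),
        ← Finset.card_erase_add_one hI, pow_succ]
      simp
  · rintro ⟨I, J⟩ hp hne hJ
    simp only [Finset.mem_filter, Finset.mem_univ, true_and] at hp
    obtain ⟨⟨rfl, -⟩, hI⟩ := hp
    refine hne ?_
    rw [cycProdAsc_mul_cycProdDesc_eq_zero hu hsq hI hJ
      (fun h => hc' (Finset.mem_union_left _ h)) (fun h => hc' (Finset.mem_union_right _ h)),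
      mul_zero]

theorem sum_neg_one_pow_cycProdAsc_mul_cycProdDesc {r : ℕ} (hr : 1 ≤ r) (hrN : r < N) :
    ∑ p : Finset (ZMod N) × Finset (ZMod N) with p.1.card + p.2.card = r,
      (-1) ^ p.1.card * (cycProdAsc u p.1 * cycProdDesc u p.2) = 0 := by
  rw [← Finset.sum_fiberwise _ fun p => p.1 ∪ p.2]
  refine Finset.sum_eq_zero fun K _ => ?_
  rw [Finset.filter_filter]
  by_cases hcard : 1 ≤ K.card ∧ K.card < N
  · simp only [and_comm (a := _ = r)]
    refine sum_neg_one_pow_cycProdAsc_mul_cycProdDesc_of_union_eq hu hsq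
      (Finset.card_pos.1 hcard.1) (fun h => ?_) r
    simp [h] at hcard
  · refine Finset.sum_eq_zero fun p hp => absurd ?_ hcard
    obtain ⟨hpr, rfl⟩ := (Finset.mem_filter.1 hp).2
    have := Finset.card_union_le p.1 p.2
    have := Finset.card_le_card (Finset.subset_union_left (s₁ := p.1) (s₂ := p.2))
    have := Finset.card_le_card (Finset.subset_union_right (s₁ := p.1) (s₂ := p.2))
    omega

theorem sum_antidiagonal_cycProdAsc_mul_cycProdDesc {r : ℕ} (hr : 1 ≤ r) (hrN : r < N) :
    ∑ p ∈ Finset.HasAntidiagonal.antidiagonal r, (-1) ^ p.1 *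
      ((∑ I ∈ Finset.powersetCard p.1 Finset.univ, cycProdAsc u I) *
        ∑ J ∈ Finset.powersetCard p.2 Finset.univ, cycProdDesc u J) = 0 := by
  rw [← sum_neg_one_pow_cycProdAsc_mul_cycProdDesc hu hsq hr hrN,
    ← Finset.sum_fiberwise_of_maps_to (t := Finset.HasAntidiagonal.antidiagonal r)
      (g := fun p : Finset (ZMod N) × Finset (ZMod N) => (p.1.card, p.2.card)) (by simp)]
  refine Finset.sum_congr rfl fun ab hab => ?_
  have hfiber : (Finset.univ.filter fun p : Finset (ZMod N) × Finset (ZMod N) =>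
      p.1.card + p.2.card = r).filter (fun p => (p.1.card, p.2.card) = ab) =
      Finset.powersetCard ab.1 Finset.univ ×ˢ Finset.powersetCard ab.2 Finset.univ := by
    ext p
    simp only [Finset.mem_filter, Finset.mem_univ, true_and, Finset.mem_product,
      Finset.mem_powersetCard_univ, Prod.ext_iff]
    have := Finset.HasAntidiagonal.mem_antidiagonal.1 hab
    omega
  rw [hfiber, Finset.sum_mul_sum, ← Finset.sum_product', Finset.mul_sum]
  refine Finset.sum_congr rfl fun p hp => ?_
  rw [(Finset.mem_powersetCard_univ.1 (Finset.mem_product.1 hp).1)]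

end NoncommutativeDuality

section Hopping

variable {R : Type*} [CommRing R] {N : ℕ} [NeZero N] (q : R)

theorem uOp_apply (c : ZMod N) (f : WSp R N) (w : ZMod N → Bool) :
    uOp R N q c f w = if w c = false ∧ w (c + 1) = true then
      (if c = 0 then q else 1) * f (w ∘ Equiv.swap c (c + 1)) else 0 := by
  induction f using Finsupp.induction_linear with
  | zero => simp
  | add f g hf hg =>
    rw [map_add, Finsupp.add_apply, hf, hg, Finsupp.add_apply]
    split_ifs <;> ring
  | single v a =>
    have hswap : v ∘ Equiv.swap c (c + 1) = w ↔ v = w ∘ Equiv.swap c (c + 1) := by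
      constructor <;> rintro rfl <;> ext p <;> simp
    simp only [uOp, Finsupp.lift_apply]
    rw [Finsupp.sum_single_index (by simp), Finsupp.single_apply]
    by_cases hv : v = w ∘ Equiv.swap c (c + 1)
    · subst hv
      have hcomp : (w ∘ Equiv.swap c (c + 1)) ∘ Equiv.swap c (c + 1) = w := hswap.2 rfl
      simp [hcomp, and_comm, mul_comm, apply_ite (fun g : WSp R N => g w)]
    · rw [if_neg hv]
      split_ifs <;> simp [hswap, hv]

theorem uOp_mul_self (c : ZMod N) : uOp R N q c * uOp R N q c = 0 := by
  ext w v
  simp only [Finsupp.lsingle_apply, LinearMap.coe_comp, Function.comp_apply, Module.End.mul_apply]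
  rw [uOp_apply, uOp_apply]
  by_cases h : v c = false <;> simp [h]

theorem uOp_commute {a b : ZMod N} (hab : a ≠ b + 1) (hba : b ≠ a + 1) :
    Commute (uOp R N q a) (uOp R N q b) := by
  rcases eq_or_ne a b with rfl | hne
  · exact Commute.refl _
  have hsucc : a + 1 ≠ b + 1 := fun h => hne (add_right_cancel h)
  have hdisj : (Equiv.swap a (a + 1)).Disjoint (Equiv.swap b (b + 1)) := fun p => by
    by_cases h : p = a ∨ p = a + 1
    · right
      rcases h with rfl | rfl
      · exact Equiv.swap_apply_of_ne_of_ne hne hab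
      · exact Equiv.swap_apply_of_ne_of_ne hba.symm hsucc
    · left
      exact Equiv.swap_apply_of_ne_of_ne (fun hp => h (.inl hp)) fun hp => h (.inr hp)
  have hcomm (w : ZMod N → Bool) : (w ∘ Equiv.swap a (a + 1)) ∘ Equiv.swap b (b + 1) =
      (w ∘ Equiv.swap b (b + 1)) ∘ Equiv.swap a (a + 1) := by
    ext p
    exact congrArg w (DFunLike.congr_fun hdisj.commute.eq p)
  refine LinearMap.ext fun f => Finsupp.ext fun w => ?_
  simp only [Module.End.mul_apply, uOp_apply, hcomm]
  simp only [Function.comp_apply, Equiv.swap_apply_of_ne_of_ne hne.symm hba,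
    Equiv.swap_apply_of_ne_of_ne hab.symm hsucc.symm, Equiv.swap_apply_of_ne_of_ne hne hab,
    Equiv.swap_apply_of_ne_of_ne hba.symm hsucc]
  split_ifs <;> ring

theorem eUInt_natCast {r : ℕ} (hr : r < N) : eUInt R N q (r : ℤ) =
    ∑ I ∈ Finset.powersetCard r Finset.univ, cycProdAsc (uOp R N q) I := by
  rcases r.eq_zero_or_pos with rfl | hpos
  · simp [eUInt]
  · rw [eUInt, if_neg (by omega), if_pos (by omega), Int.toNat_natCast]

theorem hUOp_zero : hUOp R N q 0 = 1 := by
  simp [hUOp]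

theorem sum_antidiagonal_eUInt_mul_hUOp {r : ℕ} (hr : 1 ≤ r) (hrN : r < N) :
    ∑ p ∈ Finset.HasAntidiagonal.antidiagonal r,
      (-1) ^ p.1 * (eUInt R N q (p.1 : ℤ) * hUOp R N q p.2) = 0 := by
  have hdual := sum_antidiagonal_cycProdAsc_mul_cycProdDesc (u := uOp R N q)
    (fun a b => uOp_commute q) (uOp_mul_self q) hr hrN
  refine Eq.trans (Finset.sum_congr rfl fun p hp => ?_) hdual
  have := Finset.HasAntidiagonal.mem_antidiagonal.1 hp
  rw [eUInt_natCast q (by omega), hUOp]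

end Hopping

section HopSource

variable {N : ℕ} {w : ZMod N → Bool} {I : Finset (ZMod N)} {c : ZMod N}

/-- The word `w` can result from one hop `i → i + 1` for each `i ∈ I`, performed in the order of
`cycProdAsc`, in which a hop at `i + 1` comes before one at `i`. -/
def IsHopTarget (w : ZMod N → Bool) (I : Finset (ZMod N)) : Prop :=
  ∀ i ∈ I, w (i + 1) = true ∧ (i - 1 ∉ I → w i = false)

/-- The word from which the hops at the sites of `I` lead to `w`. -/
def hopSource (w : ZMod N → Bool) (I : Finset (ZMod N)) : ZMod N → Bool :=
  fun p => decide (p ∈ I ∨ (w p = true ∧ p - 1 ∉ I))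

@[simp]
theorem hopSource_empty (w : ZMod N → Bool) : hopSource w ∅ = w := by
  ext p
  simp [hopSource]

theorem isHopTarget_insert (hc : c ∉ I) (hc' : c + 1 ∉ insert c I) :
    IsHopTarget w (insert c I) ↔
      IsHopTarget w I ∧ hopSource w I c = false ∧ hopSource w I (c + 1) = true := by
  have hpred {i : ZMod N} (hi : i ∈ insert c I) : i - 1 ∈ insert c I ↔ i - 1 ∈ I := by
    refine Finset.mem_insert.trans (or_iff_right fun h => hc' ?_)
    rwa [← h, sub_add_cancel, h]
  have hcI : c + 1 ∉ I := fun h => hc' (Finset.mem_insert_of_mem h)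
  have hI : IsHopTarget w (insert c I) ↔
      ∀ i ∈ insert c I, w (i + 1) = true ∧ (i - 1 ∉ I → w i = false) :=
    forall₂_congr fun i hi => by rw [hpred hi]
  rw [hI, Finset.forall_mem_insert, and_comm]
  refine and_congr Iff.rfl ?_
  simp [hopSource, hc, hcI, and_comm, not_imp_comm]

theorem hopSource_insert (hc : c ∉ I) (hc' : c + 1 ∉ insert c I)
    (hw : IsHopTarget w (insert c I)) :
    hopSource w (insert c I) = hopSource w I ∘ Equiv.swap c (c + 1) := by
  obtain ⟨-, hwc, hwc'⟩ := (isHopTarget_insert hc hc').1 hw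
  have hcc : c + 1 ≠ c := fun h => hc' (by simp [h])
  have hcI : c + 1 ∉ I := fun h => hc' (Finset.mem_insert_of_mem h)
  ext p
  rw [Function.comp_apply]
  rcases eq_or_ne p c with rfl | hpc
  · rw [Equiv.swap_apply_left, hwc']
    simp [hopSource]
  rcases eq_or_ne p (c + 1) with rfl | hpc'
  · rw [Equiv.swap_apply_right, hwc]
    simp [hopSource, hcc, hcI]
  · rw [Equiv.swap_apply_of_ne_of_ne hpc hpc']
    simp [hopSource, hpc, sub_eq_iff_eq_add, hpc']

end HopSource

section OrderedHops

variable {R : Type*} [CommRing R] {N : ℕ} [NeZero N] (q : R) {I : Finset (ZMod N)}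

open Classical in
theorem cycProdAsc_uOp_apply (hI : I ≠ Finset.univ) (f : WSp R N) (w : ZMod N → Bool) :
    cycProdAsc (uOp R N q) I f w =
      if IsHopTarget w I then (if 0 ∈ I then q else 1) * f (hopSource w I) else 0 := by
  revert f w
  refine proper_subset_induction hI (fun f w => by simp [IsHopTarget]) ?_
  intro c I hc hc' hI ih f w
  rw [cycProdAsc_insert (fun a b => uOp_commute q) hc (mt Finset.mem_insert_of_mem hc') hI,
    Module.End.mul_apply, ih, uOp_apply]
  by_cases hw : IsHopTarget w (insert c I)
  · obtain ⟨hwI, hwc⟩ := (isHopTarget_insert hc hc').1 hw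
    rw [if_pos hw, if_pos hwI, if_pos hwc, hopSource_insert hc hc' hw, ← mul_assoc]
    rcases eq_or_ne c 0 with rfl | h0
    · simp [hc]
    · simp [h0, h0.symm]
  · rw [if_neg hw]
    rw [isHopTarget_insert hc hc', not_and] at hw
    by_cases hwI : IsHopTarget w I
    · rw [if_pos hwI, if_neg (hw hwI), mul_zero]
    · rw [if_neg hwI]

theorem exists_hopSource_eq_comp_perm (hI : I ≠ Finset.univ) {w : ZMod N → Bool}
    (hw : IsHopTarget w I) : ∃ σ : Equiv.Perm (ZMod N), hopSource w I = w ∘ σ := by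
  revert hw
  refine proper_subset_induction hI (fun _ => ⟨1, by simp⟩) fun c I hc hc' _ ih hw => ?_
  obtain ⟨σ, hσ⟩ := ih ((isHopTarget_insert hc hc').1 hw).1
  exact ⟨σ * Equiv.swap c (c + 1), by rw [hopSource_insert hc hc' hw, hσ]; rfl⟩

end OrderedHops

section SymmetricFunctions

open PowerSeries in
theorem coeff_prod_one_sub_C_mul_X {ι R : Type*} [CommRing R] (s : Finset ι) (x : ι → R) (r : ℕ) :
    coeff r (∏ i ∈ s, (1 - C (x i) * X)) =
      (-1) ^ r * ∑ t ∈ Finset.powersetCard r s, ∏ i ∈ t, x i := by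
  classical
  have hexpand : ∏ i ∈ s, (1 - C (x i) * X) =
      ∑ t ∈ s.powerset, monomial t.card ((-1) ^ t.card * ∏ i ∈ t, x i) := by
    simp only [sub_eq_add_neg]
    rw [Finset.prod_one_add]
    refine Finset.sum_congr rfl fun t _ => ?_
    rw [Finset.prod_neg, Finset.prod_mul_distrib, Finset.prod_const, ← map_prod,
      monomial_eq_C_mul_X_pow, map_mul]
    simp [mul_assoc]
  rw [hexpand, map_sum, Finset.mul_sum, Finset.powersetCard_eq_filter, Finset.sum_filter]
  refine Finset.sum_congr rfl fun t _ => ?_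
  rw [coeff_monomial]
  by_cases h : t.card = r
  · rw [if_pos h.symm, if_pos h, h]
  · rw [if_neg (Ne.symm h), if_neg h]

variable {m : ℕ} (x : Fin m → ℂ)

theorem eC_natCast (r : ℕ) :
    eC x (r : ℤ) = ∑ t ∈ Finset.powersetCard r Finset.univ, ∏ i ∈ t, x i := by
  simp [eC]

theorem hC_of_neg {r : ℤ} (hr : r < 0) : hC x r = 0 := by
  rw [hC, if_neg hr.not_ge]

theorem hC_natCast (r : ℕ) :
    hC x (r : ℤ) = ∑ p ∈ Finset.finsuppAntidiag Finset.univ r, ∏ i, x i ^ p i := by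
  rw [hC, if_pos (Int.natCast_nonneg r), Int.toNat_natCast]
  refine Finset.sum_bij' (fun p _ => Finsupp.equivFunOnFinite.symm p) (fun p _ => p)
    (fun p hp => ?_) (fun p hp => ?_) (fun p _ => rfl) (fun p _ => by ext; rfl) fun p _ => rfl
  · simpa [Finset.mem_finsuppAntidiag] using (Finset.mem_filter.1 hp).2
  · have hsum : ∑ i, p i = r := (Finset.mem_finsuppAntidiag.1 hp).1
    refine Finset.mem_filter.2 ⟨Fintype.mem_piFinset.2 fun i => ?_, hsum⟩
    have := Finset.single_le_sum (fun j _ => Nat.zero_le (p j)) (Finset.mem_univ i)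
    rw [Finset.mem_range]
    omega

theorem hC_zero : hC x 0 = 1 := by
  simpa using hC_natCast x 0

theorem mk_hC_eq_prod :
    PowerSeries.mk (fun r : ℕ => hC x r) = ∏ i, PowerSeries.mk (fun r : ℕ => x i ^ r) := by
  ext r
  rw [PowerSeries.coeff_mk, PowerSeries.coeff_prod, hC_natCast]
  simp

theorem mk_pow_mul_one_sub_C_mul_X {R : Type*} [CommRing R] (a : R) :
    PowerSeries.mk (fun r : ℕ => a ^ r) * (1 - PowerSeries.C a * PowerSeries.X) = 1 := by
  simpa [PowerSeries.rescale_X, PowerSeries.rescale_mk] using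
    congrArg (PowerSeries.rescale a) (PowerSeries.mk_one_mul_one_sub_eq_one R)

theorem mk_hC_mul_prod :
    PowerSeries.mk (fun r : ℕ => hC x r) *
      ∏ i, (1 - PowerSeries.C (x i) * PowerSeries.X) = 1 := by
  rw [mk_hC_eq_prod, ← Finset.prod_mul_distrib]
  simp only [mk_pow_mul_one_sub_C_mul_X, Finset.prod_const_one]

theorem sum_antidiagonal_eC_mul_hC {r : ℕ} (hr : 1 ≤ r) :
    ∑ p ∈ Finset.HasAntidiagonal.antidiagonal r,
      (-1) ^ p.1 * (eC x (p.1 : ℤ) * hC x (p.2 : ℤ)) = 0 := by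
  have hcoeff := congrArg (PowerSeries.coeff r) (mk_hC_mul_prod x)
  rw [mul_comm, PowerSeries.coeff_mul, PowerSeries.coeff_one, if_neg (by omega)] at hcoeff
  rw [← hcoeff]
  refine Finset.sum_congr rfl fun p _ => ?_
  rw [coeff_prod_one_sub_C_mul_X, PowerSeries.coeff_mk, eC_natCast, mul_assoc]

/-- The matrix with columns the coefficients of `∏_{i ≠ l} (1 - x_i X)`, used to turn complete
symmetric polynomials into powers of single variables. -/
def omittedCoeff (x : Fin m → ℂ) : Matrix (Fin m) (Fin m) ℂ :=
  Matrix.of fun j l => PowerSeries.coeff (j : ℕ)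
    (∏ i ∈ Finset.univ.erase l, (1 - PowerSeries.C (x i) * PowerSeries.X))

theorem mk_hC_mul_prod_erase (l : Fin m) :
    PowerSeries.mk (fun r : ℕ => hC x r) *
        ∏ i ∈ Finset.univ.erase l, (1 - PowerSeries.C (x i) * PowerSeries.X) =
      PowerSeries.mk fun r : ℕ => x l ^ r := by
  have hprod := mk_hC_mul_prod x
  rw [← Finset.mul_prod_erase _ _ (Finset.mem_univ l)] at hprod
  linear_combination (PowerSeries.mk fun r : ℕ => x l ^ r) * hprod -
    PowerSeries.mk (fun r : ℕ => hC x r) *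
      (∏ i ∈ Finset.univ.erase l, (1 - PowerSeries.C (x i) * PowerSeries.X)) *
        mk_pow_mul_one_sub_C_mul_X (x l)

theorem sum_hC_sub_mul_omittedCoeff (l : Fin m) (a : ℕ) :
    ∑ j : Fin m, hC x ((a : ℤ) - (j : ℕ)) * omittedCoeff x j l = x l ^ a := by
  set Q := ∏ i ∈ Finset.univ.erase l, (1 - PowerSeries.C (x i) * PowerSeries.X) with hQ
  have hcoeff := congrArg (PowerSeries.coeff a) (mk_hC_mul_prod_erase x l)
  rw [PowerSeries.coeff_mk, mul_comm, PowerSeries.coeff_mul, ← hQ,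
    Finset.Nat.sum_antidiagonal_eq_sum_range_succ
      (fun j b => PowerSeries.coeff j Q * PowerSeries.coeff b (PowerSeries.mk fun r => hC x r))]
    at hcoeff
  rw [← hcoeff]
  refine (Fin.sum_univ_eq_sum_range
    (fun j => hC x ((a : ℤ) - j) * PowerSeries.coeff j Q) m).trans ?_
  refine Finset.sum_congr_of_eq_on_inter (fun j _ hj => ?_) (fun j _ hj => ?_) fun j _ hj => ?_
  · rw [Finset.mem_range] at hj
    rw [hC_of_neg x (by omega), zero_mul]
  · have hcard : (Finset.univ.erase l).card < j := by
      have := l.pos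
      rw [Finset.card_erase_of_mem (Finset.mem_univ l), Finset.card_fin]
      rw [Finset.mem_range] at hj
      omega
    rw [coeff_prod_one_sub_C_mul_X, Finset.powersetCard_eq_empty.2 hcard, Finset.sum_empty,
      mul_zero, zero_mul]
  · rw [PowerSeries.coeff_mk, mul_comm, Nat.cast_sub (Nat.lt_succ_iff.1 (Finset.mem_range.1 hj))]

end SymmetricFunctions

section Alternants

/-- The alternant `det (x_i ^ l_j)`. -/
def alternant {R : Type*} [CommRing R] {k : ℕ} (x : Fin k → R) (l : Fin k → ℕ) : R :=
  (Matrix.of fun i j => x i ^ l j).det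

variable {R : Type*} [CommRing R] {k : ℕ} (x : Fin k → R)

theorem alternant_add_one (l : Fin k → ℕ) :
    alternant x (fun i => l i + 1) = (∏ i, x i) * alternant x l := by
  rw [alternant, alternant, ← Matrix.det_mul_column]
  simp [pow_succ']

theorem alternant_comp_perm (l : Fin k → ℕ) (σ : Equiv.Perm (Fin k)) :
    alternant x (l ∘ σ) = Equiv.Perm.sign σ * alternant x l :=
  Matrix.det_permute' σ (Matrix.of fun i j => x i ^ l j)

theorem alternant_update_add {N : ℕ} {c : R} (hx : ∀ i, x i ^ N = c) (l : Fin k → ℕ)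
    (j : Fin k) (a : ℕ) :
    alternant x (Function.update l j (a + N)) = c * alternant x (Function.update l j a) := by
  have hcol (b : ℕ) : alternant x (Function.update l j b) =
      ((Matrix.of fun i j => x i ^ l j).updateCol j fun i => x i ^ b).det := by
    rw [alternant]
    congr 1
    ext i j'
    rcases eq_or_ne j' j with rfl | h
    · simp
    · simp [h]
  rw [hcol, hcol, ← Matrix.det_updateCol_smul]
  congr 2
  ext i
  simp [pow_add, hx, mul_comm]

theorem alternant_eq_zero_of_modEq {N : ℕ} {c : R} (hx : ∀ i, x i ^ N = c) {l : Fin k → ℕ}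
    {i j : Fin k} (hij : i ≠ j) (hmod : l i ≡ l j [MOD N]) : alternant x l = 0 := by
  wlog hle : l i ≤ l j generalizing i j
  · exact this hij.symm hmod.symm (le_of_not_ge hle)
  obtain ⟨t, ht⟩ := (Nat.modEq_iff_dvd' hle).1 hmod
  have hcol (a : Fin k) : x a ^ l j = c ^ t * x a ^ l i := by
    rw [← hx a, ← pow_mul, ← ht, ← pow_add, Nat.sub_add_cancel hle]
  have hsmul : (Matrix.of fun a b => x a ^ l b) =
      (Matrix.of fun a b => x a ^ l b).updateCol j (c ^ t • fun a => x a ^ l i) := by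
    ext a b
    rcases eq_or_ne b j with rfl | h
    · simp [hcol]
    · simp [h]
  rw [alternant, hsmul, Matrix.det_updateCol_smul, Matrix.det_zero_of_column_eq hij, mul_zero]
  simp [hij]

/-- The increasing positions `l` after the first particle has been carried once around a ring of
length `N`, again in increasing order. -/
def wrapFirst {k : ℕ} (N : ℕ) (l : Fin (k + 1) → ℕ) : Fin (k + 1) → ℕ :=
  Fin.snoc (Fin.tail l) (l 0 + N)

theorem strictMono_wrapFirst {k N : ℕ} {l : Fin (k + 1) → ℕ} (hl : StrictMono l)
    (hlt : ∀ i, l i < l 0 + N) : StrictMono (wrapFirst N l) := fun i j hij => by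
  rw [wrapFirst]
  induction i using Fin.lastCases with
  | last => exact absurd hij (Fin.le_last j).not_gt
  | cast i =>
    induction j using Fin.lastCases with
    | last => simpa [Fin.tail] using hlt i.succ
    | cast j =>
      simpa [Fin.tail] using hl (Fin.succ_lt_succ_iff.2 (Fin.castSucc_lt_castSucc_iff.1 hij))

theorem wrapFirst_mem_Ioc {k N : ℕ} [NeZero N] {l : Fin (k + 1) → ℕ} (hl : StrictMono l)
    (hle : ∀ i, l i ≤ l 0 + N) (i : Fin (k + 1)) : wrapFirst N l i ∈ Set.Ioc (l 0) (l 0 + N) := by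
  rw [wrapFirst]
  induction i using Fin.lastCases with
  | last => simp [NeZero.pos N]
  | cast i => simpa [Fin.tail] using ⟨hl (Fin.succ_pos i), hle i.succ⟩

theorem alternant_wrapFirst {c : R} {k N : ℕ} {x : Fin (k + 1) → R} (hx : ∀ i, x i ^ N = c)
    (l : Fin (k + 1) → ℕ) :
    alternant x (wrapFirst N l) = (-1) ^ k * c * alternant x l := by
  have hrotate : wrapFirst N l = Function.update l 0 (l 0 + N) ∘ finRotate (k + 1) := by
    funext i
    rw [wrapFirst]
    induction i using Fin.lastCases with
    | last => simp
    | cast i => simp [Fin.tail]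
  rw [hrotate, alternant_comp_perm, alternant_update_add x hx, Function.update_eq_self,
    sign_finRotate]
  push_cast
  ring

/-- The positions `l` after each particle with label in `S` has moved one step back. Positions are
natural numbers in alternants and elements of `ZMod N` in words. -/
def stepBack {ι α : Type*} [DecidableEq ι] [Sub α] [One α] (l : ι → α) (S : Finset ι) (i : ι) : α :=
  if i ∈ S then l i - 1 else l i

theorem prod_pow_stepBack {x y : Fin k → R} (hxy : ∀ i, x i * y i = 1) {l : Fin k → ℕ}
    (hl : ∀ i, 1 ≤ l i) (S : Finset (Fin k)) :
    ∏ i, x i ^ stepBack l S i = (∏ i ∈ S, y i) * ∏ i, x i ^ l i := by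
  rw [← Fintype.prod_ite_mem S y, ← Finset.prod_mul_distrib]
  refine Finset.prod_congr rfl fun i _ => ?_
  rw [stepBack]
  split_ifs
  · rw [← pow_sub_one_mul (Nat.ne_of_gt (hl i)) (x i)]
    linear_combination -x i ^ (l i - 1) * hxy i
  · rw [one_mul]

end Alternants

section Bialternant

/-- The positions `ℓ_1 < ⋯ < ℓ_k` of the particles in the word `w(λ)`. -/
def particlePos {k : ℕ} (lam : Fin k → ℕ) (i : Fin k) : ℕ := lam i.rev + i + 1

variable {k : ℕ} (x : Fin k → ℂ)

theorem schurC_eq_det_hC_sub (lam : Fin k → ℕ) :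
    schurC x lam =
      (Matrix.of fun i j : Fin k => hC x (((lam i.rev + i : ℕ) : ℤ) - (j : ℕ))).det := by
  rw [schurC, ← Matrix.det_submatrix_equiv_self Fin.revPerm]
  congr 1
  ext i j
  simp only [Matrix.submatrix_apply, Matrix.of_apply, Fin.revPerm_apply, Fin.val_rev]
  congr 1
  omega

theorem schurC_mul_det_omittedCoeff (lam : Fin k → ℕ) :
    schurC x lam * (omittedCoeff x).det = alternant x fun i => lam i.rev + i := by
  rw [schurC_eq_det_hC_sub, ← Matrix.det_mul, alternant, ← Matrix.det_transpose]
  congr 1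
  ext l i
  simp only [Matrix.transpose_apply, Matrix.mul_apply, Matrix.of_apply]
  exact sum_hC_sub_mul_omittedCoeff x l _

theorem det_omittedCoeff : (omittedCoeff x).det = (Matrix.vandermonde x).det := by
  have hone : schurC x (fun _ => 0) = 1 := by
    rw [schurC_eq_det_hC_sub, Matrix.det_of_isLowerTriangular]
    · simp [hC_zero]
    · intro i j hij
      have : (i : ℕ) < j := hij
      exact hC_of_neg x (by push_cast; omega)
  rw [← one_mul (omittedCoeff x).det, ← hone, schurC_mul_det_omittedCoeff]
  simp [alternant, Matrix.vandermonde]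

theorem schurC_mul_vandermonde (lam : Fin k → ℕ) :
    schurC x lam * ((∏ i, x i) * (Matrix.vandermonde x).det) = alternant x (particlePos lam) := by
  unfold particlePos
  rw [alternant_add_one, ← schurC_mul_det_omittedCoeff, det_omittedCoeff]
  ring

theorem eC_comp_perm (σ : Equiv.Perm (Fin k)) (r : ℤ) : eC (x ∘ σ) r = eC x r := by
  rw [eC, eC]
  congr 1
  conv_rhs => rw [← Finset.map_univ_equiv σ, Finset.powersetCard_map, Finset.sum_map]
  simp

/-- Every term of the Leibniz expansion of the alternant picks up the factor `e_r(y)`. -/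
theorem sum_alternant_stepBack {y : Fin k → ℂ} (hxy : ∀ i, x i * y i = 1) {l : Fin k → ℕ}
    (hl : ∀ i, 1 ≤ l i) (r : ℕ) :
    ∑ S ∈ Finset.powersetCard r Finset.univ, alternant x (stepBack l S) =
      eC y r * alternant x l := by
  simp only [alternant, Matrix.det_apply', Matrix.of_apply]
  rw [Finset.sum_comm, Finset.mul_sum]
  refine Finset.sum_congr rfl fun σ _ => ?_
  have hprod := prod_pow_stepBack (x := x ∘ σ) (y := y ∘ σ) (fun i => hxy (σ i)) hl
  simp only [Function.comp_apply] at hprod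
  simp only [hprod]
  rw [← Finset.mul_sum, ← Finset.sum_mul, ← eC_comp_perm y σ, eC_natCast]
  exact mul_left_comm _ _ _

end Bialternant

section Occupation

variable {N : ℕ} {ι : Type*}

open Classical in
/-- The word whose 1-letters occupy the sites `a i`. -/
def occupation (a : ι → ZMod N) : ZMod N → Bool := fun p => decide (∃ i, a i = p)

@[simp]
theorem occupation_eq_true {a : ι → ZMod N} {p : ZMod N} :
    occupation a p = true ↔ ∃ i, a i = p := by
  simp [occupation]

@[simp]
theorem occupation_eq_false {a : ι → ZMod N} {p : ZMod N} :
    occupation a p = false ↔ ∀ i, a i ≠ p := by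
  simp [occupation]

theorem occupation_inj {κ : Type*} {a : ι → ZMod N} {b : κ → ZMod N} :
    occupation a = occupation b ↔ Set.range a = Set.range b := by
  simp [funext_iff, Set.ext_iff, occupation]

theorem eq_occupation_of_comp_perm {a : ι → ZMod N} {w : ZMod N → Bool}
    {σ : Equiv.Perm (ZMod N)} (h : w ∘ σ = occupation a) : w = occupation (σ ∘ a) := by
  rw [(Equiv.eq_comp_symm σ w _).2 h]
  ext p
  simp [Equiv.eq_symm_apply, occupation]

variable (a : ι ↪ ZMod N) (S : Finset ι)

/-- The sites `i` whose hops `i → i + 1` lead to the positions of the particles labelled by `S`. -/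
def hopSites : Finset (ZMod N) := S.map (a.trans (Equiv.subRight 1).toEmbedding)

variable {a S}

theorem mem_hopSites {p : ZMod N} : p ∈ hopSites a S ↔ ∃ i ∈ S, a i = p + 1 := by
  simp [hopSites, sub_eq_iff_eq_add]

theorem sub_one_mem_hopSites {i : ι} : a i - 1 ∈ hopSites a S ↔ i ∈ S := by
  simp [mem_hopSites]

theorem isHopTarget_hopSites_iff :
    IsHopTarget (occupation a) (hopSites a S) ↔ ∀ j ∈ S, ∀ i, a i = a j - 1 → i ∈ S := by
  have hsite (j : ι) :
      (occupation a (a j - 1 + 1) = true ∧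
        (a j - 1 - 1 ∉ hopSites a S → occupation a (a j - 1) = false)) ↔
      ∀ i, a i = a j - 1 → i ∈ S := by
    simp only [sub_add_cancel, occupation_eq_true, exists_apply_eq_apply, true_and,
      occupation_eq_false]
    refine not_imp_comm.trans ⟨fun h i hi => ?_, fun h => ?_⟩
    · rw [← sub_one_mem_hopSites (a := a), hi]
      exact h fun hne => hne i hi
    · push Not
      rintro ⟨i, hi⟩
      rw [← hi, sub_one_mem_hopSites]
      exact h i hi
  simp only [IsHopTarget, hopSites, Finset.forall_mem_map]
  exact forall₂_congr fun j _ => hsite j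

theorem IsHopTarget.subset_hopSites [Fintype ι] {I : Finset (ZMod N)}
    (h : IsHopTarget (occupation a) I) : I ⊆ hopSites a Finset.univ := fun p hp => by
  simpa [mem_hopSites] using (h p hp).1

variable [DecidableEq ι]

theorem isHopTarget_hopSites :
    IsHopTarget (occupation a) (hopSites a S) ↔ Function.Injective (stepBack a S) := by
  rw [isHopTarget_hopSites_iff]
  constructor
  · intro h i j hij
    by_cases hi : i ∈ S <;> by_cases hj : j ∈ S <;> simp only [stepBack, hi, hj, if_true, if_false]
      at hij
    · exact a.injective (sub_left_injective hij)
    · exact absurd (h i hi j hij.symm) hj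
    · exact absurd (h j hj i hij) hi
    · exact a.injective hij
  · intro h j hj i hij
    by_contra hi
    have : i = j := h (by simp [stepBack, hi, hj, hij])
    exact hi (this ▸ hj)

theorem hopSource_hopSites :
    hopSource (occupation a) (hopSites a S) = occupation (stepBack a S) := by
  ext p
  rw [Bool.eq_iff_iff, hopSource, decide_eq_true_iff, occupation_eq_true, mem_hopSites,
    mem_hopSites, sub_add_cancel, occupation_eq_true]
  constructor
  · rintro (⟨i, hi, hip⟩ | ⟨⟨i, rfl⟩, hi⟩)
    · exact ⟨i, by simp [stepBack, hi, hip]⟩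
    · exact ⟨i, if_neg fun h => hi ⟨i, h, rfl⟩⟩
  · rintro ⟨i, rfl⟩
    by_cases hi : i ∈ S
    · exact .inl ⟨i, hi, by simp [stepBack, hi]⟩
    · refine .inr ⟨⟨i, by simp [stepBack, hi]⟩, ?_⟩
      rintro ⟨j, hj, hji⟩
      rw [stepBack, if_neg hi, a.injective.eq_iff] at hji
      exact hi (hji ▸ hj)

variable {R : Type*} [CommRing R] [NeZero N] (q : R)

theorem ne_univ_of_mem_powersetCard {r : ℕ} (hr : r < N) {I : Finset (ZMod N)}
    (hI : I ∈ Finset.powersetCard r Finset.univ) : I ≠ Finset.univ := by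
  rintro rfl
  rw [Finset.mem_powersetCard_univ, Finset.card_univ, ZMod.card] at hI
  exact hr.ne' hI

open Classical in
theorem eUInt_apply_occupation [Fintype ι] {r : ℕ} (hr : r < N) (f : WSp R N) :
    eUInt R N q r f (occupation a) =
      ∑ S ∈ Finset.powersetCard r Finset.univ,
        if Function.Injective (stepBack a S) then
          (if 0 ∈ hopSites a S then q else 1) * f (occupation (stepBack a S)) else 0 := by
  rw [eUInt_natCast q hr, LinearMap.sum_apply, Finsupp.finsetSum_apply,
    Finset.sum_congr rfl fun I hI =>
      cycProdAsc_uOp_apply q (ne_univ_of_mem_powersetCard hr hI) f _,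
    ← Finset.sum_subset (Finset.powersetCard_mono (Finset.subset_univ (hopSites a Finset.univ)))]
  · rw [hopSites, Finset.powersetCard_map, Finset.sum_map]
    refine Finset.sum_congr rfl fun S _ => ?_
    rw [RelEmbedding.coe_toEmbedding, Finset.mapEmbedding_apply, ← hopSites,
      hopSource_hopSites]
    simp only [isHopTarget_hopSites]
  · intro I hI hI'
    refine if_neg fun h => hI' ?_
    exact Finset.mem_powersetCard.2 ⟨h.subset_hopSites, (Finset.mem_powersetCard.1 hI).2⟩

theorem eUInt_apply_eq_zero {r : ℕ} (hr : r < N) {f : WSp R N} {w : ZMod N → Bool}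
    (hf : ∀ σ : Equiv.Perm (ZMod N), f (w ∘ σ) = 0) : eUInt R N q r f w = 0 := by
  classical
  rw [eUInt_natCast q hr, LinearMap.sum_apply, Finsupp.finsetSum_apply]
  refine Finset.sum_eq_zero fun I hI => ?_
  have hI := ne_univ_of_mem_powersetCard hr hI
  rw [cycProdAsc_uOp_apply q hI]
  refine ite_eq_right_iff.2 fun hw => ?_
  obtain ⟨σ, hσ⟩ := exists_hopSource_eq_comp_perm hI hw
  rw [hσ, hf, mul_zero]

end Occupation

section Positions

theorem natCast_zmod_injOn_Icc (N : ℕ) :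
    Set.InjOn (Nat.cast : ℕ → ZMod N) (Set.Icc 1 N) := by
  intro a ha b hb h
  rw [Set.mem_Icc] at ha hb
  exact ((ZMod.natCast_eq_natCast_iff a b N).1 h).eq_of_abs_lt (abs_lt.2 (by omega))

theorem exists_strictMono_range_natCast_eq {N k : ℕ} [NeZero N] (a : Fin k ↪ ZMod N) :
    ∃ l : Fin k → ℕ, StrictMono l ∧ (∀ i, l i ∈ Set.Icc 1 N) ∧
      Set.range (fun i => (l i : ZMod N)) = Set.range a := by
  have hcast (p : ZMod N) : (((p - 1).val + 1 : ℕ) : ZMod N) = p := by simp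
  let rep : ZMod N ↪ ℕ := ⟨fun p => (p - 1).val + 1, Function.LeftInverse.injective hcast⟩
  let T : Finset ℕ := Finset.univ.map (a.trans rep)
  have hT : T.card = k := by simp [T]
  have hrange : Set.range (T.orderEmbOfFin hT) = Set.range (rep ∘ a) := by
    simp [T, Finset.range_orderEmbOfFin, Function.comp_def]
  refine ⟨T.orderEmbOfFin hT, (T.orderEmbOfFin hT).strictMono, fun i => ?_, ?_⟩
  · obtain ⟨j, hj⟩ := hrange.subset (Set.mem_range_self i)
    rw [← hj]
    exact ⟨Nat.le_add_left _ _, ZMod.val_lt _⟩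
  · change Set.range (Nat.cast ∘ T.orderEmbOfFin hT) = _
    rw [Set.range_comp, hrange, ← Set.range_comp]
    exact congrArg Set.range (funext fun i => hcast (a i))

variable {n k : ℕ}

theorem strictMono_particlePos {lam : Fin k → ℕ} (h : Antitone lam) :
    StrictMono (particlePos lam) := fun i j hij => by
  have hlam := h (Fin.rev_le_rev.2 hij.le)
  have : (i : ℕ) < j := hij
  rw [particlePos, particlePos]
  omega

theorem particlePos_injective : Function.Injective (particlePos (k := k)) := fun lam mu h => by
  funext i
  simpa [particlePos] using congrFun h i.rev

theorem antitone_partVal (σ : PartBox k n) : Antitone (partVal σ) := fun i j hij => σ.2 i j hij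

theorem particlePos_partVal_mem_Icc (σ : PartBox k n) (i : Fin k) :
    particlePos (partVal σ) i ∈ Set.Icc 1 (n + k) := by
  have := (σ.1 i.rev).2
  have := i.2
  rw [particlePos, partVal, Set.mem_Icc]
  omega

theorem exists_particlePos_partVal_eq {l : Fin k → ℕ} (hl : StrictMono l)
    (hmem : ∀ i, l i ∈ Set.Icc 1 (n + k)) : ∃ σ : PartBox k n, particlePos (partVal σ) = l := by
  have hlow (i : Fin k) : i + 1 ≤ l i := by
    have := Finset.card_le_card_of_injOn l (s := Finset.Iio i) (t := Finset.Ico 1 (l i))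
      (fun j hj => by simpa using ⟨(hmem j).1, hl (by simpa using hj)⟩) hl.injective.injOn
    have := (hmem i).1
    simp only [Fin.card_Iio, Nat.card_Ico] at *
    omega
  have hup (i : Fin k) : l i ≤ n + i + 1 := by
    have := Finset.card_le_card_of_injOn l (s := Finset.Ioi i) (t := Finset.Ioc (l i) (n + k))
      (fun j hj => by simpa using ⟨hl (by simpa using hj), (hmem j).2⟩) hl.injective.injOn
    have := (hmem i).2
    simp only [Fin.card_Ioi, Nat.card_Ioc] at *
    omega
  have hgap {i j : Fin k} (hij : i ≤ j) : l i - (i + 1) ≤ l j - (j + 1) := by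
    have := Finset.card_le_card_of_injOn l (s := Finset.Ico i j) (t := Finset.Ico (l i) (l j))
      (fun m hm => by
        rw [Finset.mem_coe, Finset.mem_Ico] at hm
        simpa using ⟨hl.monotone hm.1, hl hm.2⟩) hl.injective.injOn
    have := hl.monotone hij
    have : (i : ℕ) ≤ j := hij
    simp only [Fin.card_Ico, Nat.card_Ico] at *
    omega
  refine ⟨⟨fun i => ⟨l i.rev - (i.rev + 1), by have := hup i.rev; omega⟩,
    fun i j hij => hgap (Fin.rev_le_rev.2 hij)⟩, funext fun i => ?_⟩
  have := hlow i
  simp only [particlePos, partVal, Fin.rev_rev]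
  omega

theorem monotone_stepBack {l : Fin k → ℕ} (hl : StrictMono l) (S : Finset (Fin k)) :
    Monotone (stepBack l S) := by
  refine monotone_iff_forall_lt.2 fun i j hij => ?_
  have := hl hij
  rw [stepBack, stepBack]
  split_ifs <;> omega

end Positions

section BetheVector

variable {n k : ℕ} [NeZero (n + k)] {y : Fin k → ℂ} {q : ℂ}

/-- The denominator `∏ x_i · det (x_i ^ (j-1))` of the bialternant formula in terms of the particle
positions. -/
def weylDenominator {R : Type*} [CommRing R] (x : Fin k → R) : R :=
  (∏ i, x i) * (Matrix.vandermonde x).det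

theorem weylDenominator_inv_ne_zero (hy0 : ∀ i, y i ≠ 0) (hyd : Function.Injective y) :
    weylDenominator y⁻¹ ≠ 0 :=
  mul_ne_zero (Finset.prod_ne_zero_iff.2 fun i _ => inv_ne_zero (hy0 i))
    (Matrix.det_vandermonde_ne_zero_iff.2 (inv_injective.comp hyd))

/-- The word with particles at the positions `l i`, taken modulo `N`. -/
def particleWord (N : ℕ) (l : Fin k → ℕ) : ZMod N → Bool := occupation fun i => (l i : ZMod N)

theorem particleWord_wrapFirst (N : ℕ) (l : Fin (k + 1) → ℕ) :
    particleWord N (wrapFirst N l) = particleWord N l := by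
  refine occupation_inj.2 ?_
  have hword : (fun i => (wrapFirst N l i : ZMod N)) =
      Fin.snoc (fun i : Fin k => (l i.succ : ZMod N)) (l 0 : ZMod N) := by
    funext i
    rw [wrapFirst]
    induction i using Fin.lastCases <;> simp [Fin.tail]
  rw [hword, Fin.range_snoc]
  change _ = Set.range (Nat.cast ∘ l)
  rw [← Fin.cons_self_tail (Nat.cast ∘ l : Fin (k + 1) → ZMod N), Fin.range_cons]
  rfl

theorem wordOf_eq_particleWord (N : ℕ) (lam : Fin k → ℕ) :
    wordOf N k lam = particleWord N (particlePos lam) := by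
  ext p
  simp [wordOf, particleWord, occupation, particlePos, eq_comm]

theorem particleWord_injOn (N : ℕ) :
    Set.InjOn (particleWord N) {l : Fin k → ℕ | StrictMono l ∧ ∀ i, l i ∈ Set.Icc 1 N} := by
  rintro l ⟨hl, hmem⟩ l' ⟨hl', hmem'⟩ h
  have hrange := occupation_inj.1 h
  change Set.range (Nat.cast ∘ l) = Set.range (Nat.cast ∘ l') at hrange
  rwa [Set.range_comp, Set.range_comp, (natCast_zmod_injOn_Icc N).image_eq_image_iff
    (Set.range_subset_iff.2 hmem) (Set.range_subset_iff.2 hmem'), hl.range_inj hl'] at hrange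

theorem fermiBethe_apply_particlePos (σ : PartBox k n) :
    fermiBethe n k y (particleWord (n + k) (particlePos (partVal σ))) =
      schurC y⁻¹ (partVal σ) := by
  rw [fermiBethe, Finsupp.finsetSum_apply, Finset.sum_eq_single σ]
  · rw [wordOf_eq_particleWord, Finsupp.single_eq_same]
    rfl
  · intro τ _ hτ
    rw [wordOf_eq_particleWord]
    refine Finsupp.single_eq_of_ne fun h => hτ ?_
    have hpos := particleWord_injOn (n + k)
      ⟨strictMono_particlePos (antitone_partVal σ), particlePos_partVal_mem_Icc σ⟩
      ⟨strictMono_particlePos (antitone_partVal τ), particlePos_partVal_mem_Icc τ⟩ h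
    exact Subtype.ext (funext fun i => Fin.ext (congrFun (particlePos_injective hpos).symm i))
  · simp

theorem fermiBethe_mul_weylDenominator {l : Fin k → ℕ} (hl : StrictMono l)
    (hmem : ∀ i, l i ∈ Set.Icc 1 (n + k)) :
    fermiBethe n k y (particleWord (n + k) l) * weylDenominator y⁻¹ = alternant y⁻¹ l := by
  obtain ⟨σ, rfl⟩ := exists_particlePos_partVal_eq hl hmem
  rw [fermiBethe_apply_particlePos, weylDenominator, schurC_mul_vandermonde]

theorem exists_eq_occupation_of_fermiBethe_ne_zero {w : ZMod (n + k) → Bool}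
    (hw : fermiBethe n k y w ≠ 0) :
    ∃ a : Fin k ↪ ZMod (n + k), w = occupation a := by
  rw [fermiBethe, Finsupp.finsetSum_apply] at hw
  obtain ⟨σ, -, hσ⟩ := Finset.exists_ne_zero_of_sum_ne_zero hw
  rw [wordOf_eq_particleWord] at hσ
  have hinj : Function.Injective fun i => (particlePos (partVal σ) i : ZMod (n + k)) :=
    fun i j hij => (strictMono_particlePos (antitone_partVal σ)).injective
      (natCast_zmod_injOn_Icc _ (particlePos_partVal_mem_Icc σ i) (particlePos_partVal_mem_Icc σ j)
        hij)
  exact ⟨⟨_, hinj⟩, (Finsupp.single_apply_ne_zero.1 hσ).1⟩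

/-- Carrying the particle at position `0` to position `N` rotates the columns of the alternant and
rescales one of them; the two factors cancel against `q` by the Bethe equations. -/
theorem mul_fermiBethe_mul_weylDenominator_of_zero (hy0 : ∀ i, y i ≠ 0)
    (hbethe : ∀ i, y i ^ (n + k) = (-1) ^ (k - 1) * q) {l : Fin k → ℕ} (hl : StrictMono l)
    (hle : ∀ i, l i ≤ n + k) (hinj : Function.Injective fun i => (l i : ZMod (n + k)))
    (hzero : ∃ i, l i = 0) :
    q * fermiBethe n k y (particleWord (n + k) l) * weylDenominator y⁻¹ = alternant y⁻¹ l := by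
  obtain ⟨i, hi⟩ := hzero
  obtain ⟨k, rfl⟩ := Nat.exists_eq_add_one.2 i.pos
  have hl0 : l 0 = 0 := Nat.eq_zero_of_le_zero ((hl.monotone (Fin.zero_le i)).trans hi.le)
  have hlt (j : Fin (k + 1)) : l j < n + (k + 1) := by
    refine (hle j).lt_of_ne fun hj => ?_
    have : j = 0 := hinj (by simp only [hj, hl0, ZMod.natCast_self, Nat.cast_zero])
    rw [this, hl0] at hj
    omega
  have hmono : StrictMono (wrapFirst (n + (k + 1)) l) :=
    strictMono_wrapFirst hl fun j => by simpa [hl0] using hlt j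
  have hmem (j : Fin (k + 1)) : wrapFirst (n + (k + 1)) l j ∈ Set.Icc 1 (n + (k + 1)) := by
    simpa [hl0, Nat.one_le_iff_ne_zero, Nat.pos_iff_ne_zero] using
      wrapFirst_mem_Ioc hl (fun i => (hle i).trans (Nat.le_add_left _ _)) j
  have hinv (i : Fin (k + 1)) : y⁻¹ i ^ (n + (k + 1)) = ((-1) ^ k * q)⁻¹ := by
    rw [Pi.inv_apply, inv_pow, hbethe i, Nat.add_sub_cancel]
  have hq : (-1) ^ k * q ≠ 0 := by
    rw [← Nat.add_sub_cancel k 1, ← hbethe 0]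
    exact pow_ne_zero _ (hy0 0)
  rw [← particleWord_wrapFirst, mul_assoc, fermiBethe_mul_weylDenominator hmono hmem,
    alternant_wrapFirst hinv]
  linear_combination alternant y⁻¹ l * mul_inv_cancel₀ hq

theorem ite_mul_fermiBethe_mul_weylDenominator (hy0 : ∀ i, y i ≠ 0)
    (hbethe : ∀ i, y i ^ (n + k) = (-1) ^ (k - 1) * q) {l : Fin k → ℕ} (hl : StrictMono l)
    (hle : ∀ i, l i ≤ n + k) (hinj : Function.Injective fun i => (l i : ZMod (n + k))) :
    (if ∃ i, l i = 0 then q else 1) * fermiBethe n k y (particleWord (n + k) l) *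
      weylDenominator y⁻¹ = alternant y⁻¹ l := by
  split_ifs with hzero
  · exact mul_fermiBethe_mul_weylDenominator_of_zero hy0 hbethe hl hle hinj hzero
  · rw [one_mul]
    push Not at hzero
    exact fermiBethe_mul_weylDenominator hl fun i => ⟨Nat.one_le_iff_ne_zero.2 (hzero i), hle i⟩

end BetheVector

section Eigenvalues

variable {n k : ℕ} [NeZero (n + k)] {y : Fin k → ℂ} {q : ℂ}

theorem stepBack_eq_natCast {N : ℕ} {b : Fin k → ZMod N} {l : Fin k → ℕ} (hb : ∀ i, b i = l i)
    (hl : ∀ i, 1 ≤ l i) (S : Finset (Fin k)) :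
    stepBack b S = fun i => ((stepBack l S i : ℕ) : ZMod N) := by
  funext i
  rw [stepBack, stepBack]
  split_ifs
  · rw [Nat.cast_sub (hl i), Nat.cast_one, hb]
  · exact hb i

theorem zero_mem_hopSites_iff {N : ℕ} [NeZero N] {b : Fin k ↪ ZMod N} {l : Fin k → ℕ}
    (hb : ∀ i, b i = l i) (hl : ∀ i, l i ∈ Set.Icc 1 N) {S : Finset (Fin k)} :
    0 ∈ hopSites b S ↔ ∃ i, stepBack l S i = 0 := by
  rw [mem_hopSites]
  refine exists_congr fun i => ?_
  have hone : b i = 0 + 1 ↔ l i = 1 := by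
    rw [hb, zero_add, ← Nat.cast_one,
      (natCast_zmod_injOn_Icc N).eq_iff (hl i) ⟨le_rfl, NeZero.one_le⟩]
  have := (hl i).1
  rw [hone, stepBack]
  split_ifs with hi
  · simp only [hi, true_and]
    omega
  · simp only [hi, false_and, false_iff]
    omega

open Classical in
theorem ite_injective_stepBack_mul_weylDenominator (hy0 : ∀ i, y i ≠ 0)
    (hbethe : ∀ i, y i ^ (n + k) = (-1) ^ (k - 1) * q) {b : Fin k ↪ ZMod (n + k)}
    {l : Fin k → ℕ} (hb : ∀ i, b i = l i) (hl : StrictMono l)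
    (hmem : ∀ i, l i ∈ Set.Icc 1 (n + k)) (S : Finset (Fin k)) :
    (if Function.Injective (stepBack b S) then
        (if 0 ∈ hopSites b S then q else 1) * fermiBethe n k y (occupation (stepBack b S))
      else 0) * weylDenominator y⁻¹ = alternant y⁻¹ (stepBack l S) := by
  rw [stepBack_eq_natCast hb fun i => (hmem i).1]
  simp only [zero_mem_hopSites_iff hb hmem]
  by_cases hinj : Function.Injective fun i => ((stepBack l S i : ℕ) : ZMod (n + k))
  · rw [if_pos hinj]
    have hmono : StrictMono (stepBack l S) :=
      (monotone_stepBack hl S).strictMono_of_injective (Function.Injective.of_comp hinj)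
    have hle (i : Fin k) : stepBack l S i ≤ n + k := by
      have := (hmem i).2
      rw [stepBack]
      split_ifs <;> omega
    convert ite_mul_fermiBethe_mul_weylDenominator hy0 hbethe hmono hle hinj
    rw [particleWord]
  · obtain ⟨i, j, hij, hne⟩ := Function.not_injective_iff.1 hinj
    have hpow (i : Fin k) : y⁻¹ i ^ (n + k) = ((-1) ^ (k - 1) * q)⁻¹ := by
      rw [Pi.inv_apply, inv_pow, hbethe i]
    rw [if_neg hinj, zero_mul,
      alternant_eq_zero_of_modEq _ hpow hne ((ZMod.natCast_eq_natCast_iff _ _ _).1 hij)]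

theorem eUInt_fermiBethe (hy0 : ∀ i, y i ≠ 0) (hyd : Function.Injective y)
    (hbethe : ∀ i, y i ^ (n + k) = (-1) ^ (k - 1) * q) {r : ℕ} (hr : r < n + k) :
    eUInt ℂ (n + k) q r (fermiBethe n k y) = eC y r • fermiBethe n k y := by
  ext w
  rw [Finsupp.smul_apply, smul_eq_mul]
  by_cases hw : ∃ a : Fin k ↪ ZMod (n + k), w = occupation a
  · obtain ⟨a, rfl⟩ := hw
    obtain ⟨l, hl, hmem, hrange⟩ := exists_strictMono_range_natCast_eq a
    let b : Fin k ↪ ZMod (n + k) := ⟨fun i => (l i : ZMod (n + k)), fun i j hij =>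
      hl.injective (natCast_zmod_injOn_Icc _ (hmem i) (hmem j) hij)⟩
    rw [← (occupation_inj (a := b)).2 hrange, eUInt_apply_occupation q hr]
    refine mul_right_cancel₀ (weylDenominator_inv_ne_zero hy0 hyd) ?_
    rw [Finset.sum_mul, mul_assoc]
    refine (Finset.sum_congr rfl fun S _ => ite_injective_stepBack_mul_weylDenominator hy0 hbethe
      (b := b) (fun _ => rfl) hl hmem S).trans ?_
    rw [sum_alternant_stepBack y⁻¹ (fun i => inv_mul_cancel₀ (hy0 i)) (fun i => (hmem i).1)]
    exact congrArg _ (fermiBethe_mul_weylDenominator hl hmem).symm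
  · have hzero (σ : Equiv.Perm (ZMod (n + k))) : fermiBethe n k y (w ∘ σ) = 0 := by
      by_contra hσ
      obtain ⟨a, ha⟩ := exists_eq_occupation_of_fermiBethe_ne_zero hσ
      exact hw ⟨a.trans σ.toEmbedding, eq_occupation_of_comp_perm ha⟩
    rw [eUInt_apply_eq_zero q hr hzero, ← Function.comp_id w, ← Equiv.Perm.coe_one, hzero,
      mul_zero]

/-- Solving the alternating relations recursively expresses each `H r` through the `E p` in the same
way as `h r` through the `e p`. -/
theorem apply_eq_smul_of_sum_antidiagonal_eq_zero {R M : Type*} [CommRing R] [AddCommGroup M]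
    [Module R M] {E H : ℕ → Module.End R M} {e h : ℕ → R} {v : M} {d : ℕ}
    (hE : ∀ r < d, E r v = e r • v) (hE0 : E 0 = 1) (hH0 : H 0 = 1) (hh0 : h 0 = 1)
    (hEH : ∀ r, 1 ≤ r → r < d →
      ∑ p ∈ Finset.HasAntidiagonal.antidiagonal r, (-1) ^ p.1 * (E p.1 * H p.2) = 0)
    (heh : ∀ r, 1 ≤ r → r < d →
      ∑ p ∈ Finset.HasAntidiagonal.antidiagonal r, (-1) ^ p.1 * (e p.1 * h p.2) = 0)
    {r : ℕ} (hr : r < d) : H r v = h r • v := by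
  induction r using Nat.strong_induction_on with
  | _ r ih =>
  rcases r.eq_zero_or_pos with rfl | hpos
  · rw [hH0, hh0, one_smul, Module.End.one_apply]
  have hsum : ∑ p ∈ Finset.HasAntidiagonal.antidiagonal r,
      (-1 : R) ^ p.1 • E p.1 (H p.2 v - h p.2 • v) = 0 := by
    have hneg (a : ℕ) (F : Module.End R M) : (-1) ^ a * F = (-1 : R) ^ a • F := by
      rcases a.even_or_odd with ha | ha <;> simp [ha.neg_one_pow]
    calc _ = (∑ p ∈ Finset.HasAntidiagonal.antidiagonal r, (-1) ^ p.1 * (E p.1 * H p.2)) v -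
          (∑ p ∈ Finset.HasAntidiagonal.antidiagonal r, (-1) ^ p.1 * (e p.1 * h p.2)) • v := by
          rw [LinearMap.sum_apply, Finset.sum_smul, ← Finset.sum_sub_distrib]
          refine Finset.sum_congr rfl fun p hp => ?_
          have := Finset.HasAntidiagonal.mem_antidiagonal.1 hp
          rw [hneg, map_sub, map_smul, hE p.1 (by omega), smul_sub, LinearMap.smul_apply,
            Module.End.mul_apply, smul_smul, smul_smul, mul_assoc, mul_comm (h _)]
      _ = 0 := by
          rw [hEH r hpos hr, heh r hpos hr, LinearMap.zero_apply, zero_smul, sub_zero]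
  rw [Finset.sum_eq_single (0, r)] at hsum
  · simpa [hE0, sub_eq_zero] using hsum
  · intro p hp hne
    have hadd := Finset.HasAntidiagonal.mem_antidiagonal.1 hp
    have hlt : p.2 < r := by
      rw [ne_eq, Prod.ext_iff] at hne
      omega
    rw [ih p.2 hlt (hlt.trans hr), sub_self, map_zero, smul_zero]
  · simp

theorem hUOp_fermiBethe (hy0 : ∀ i, y i ≠ 0) (hyd : Function.Injective y)
    (hbethe : ∀ i, y i ^ (n + k) = (-1) ^ (k - 1) * q) {r : ℕ} (hr : r < n + k) :
    hUOp ℂ (n + k) q r (fermiBethe n k y) = hC y r • fermiBethe n k y :=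
  apply_eq_smul_of_sum_antidiagonal_eq_zero (E := fun r => eUInt ℂ (n + k) q r)
    (e := fun r => eC y r) (h := fun r => hC y r)
    (fun _ hr => eUInt_fermiBethe hy0 hyd hbethe hr) (by simp [eUInt]) (hUOp_zero q) (hC_zero y)
    (fun _ => sum_antidiagonal_eUInt_mul_hUOp q)
    (fun _ hr _ => sum_antidiagonal_eC_mul_hC y hr) hr

end Eigenvalues

/-- Let `y ∈ ℂ^k` have nonzero, pairwise distinct entries with
`y_1^N = ⋯ = y_k^N`, and set `q = (-1)^{k-1} y_1^N`.  Then the vector `b̃(y)` is a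
simultaneous eigenvector of the noncommutative elementary and complete symmetric
polynomials in the affine nil-Temperley–Lieb generators:
`e_r(𝒰) b̃(y) = e_r(y) b̃(y)` and `h_r(𝒰) b̃(y) = h_r(y) b̃(y)` for `1 ≤ r ≤ N-1`. -/
theorem fermi_bethe_eigenvector (n k : ℕ) (hn : 1 ≤ n) (hk : 1 ≤ k) [NeZero (n + k)]
    (hN : 3 ≤ n + k) (y : Fin k → ℂ) (hy0 : ∀ i, y i ≠ 0) (hyd : Function.Injective y)
    (hpow : ∀ i j, y i ^ (n + k) = y j ^ (n + k)) :
    ∀ r : ℕ, 1 ≤ r → r ≤ n + k - 1 →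
      eUInt ℂ (n + k) ((-1) ^ (k - 1) * y ⟨0, hk⟩ ^ (n + k)) (r : ℤ) (fermiBethe n k y) =
          eC y (r : ℤ) • fermiBethe n k y ∧
      hUOp ℂ (n + k) ((-1) ^ (k - 1) * y ⟨0, hk⟩ ^ (n + k)) r (fermiBethe n k y) =
          hC y (r : ℤ) • fermiBethe n k y := by
  intro r _ hr
  have hbethe (i : Fin k) :
      y i ^ (n + k) = (-1) ^ (k - 1) * ((-1) ^ (k - 1) * y ⟨0, hk⟩ ^ (n + k)) := by
    rw [hpow i ⟨0, hk⟩, ← mul_assoc, ← mul_pow, neg_one_mul, neg_neg, one_pow, one_mul]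
  have hrN : r < n + k := by omega
  exact ⟨eUInt_fermiBethe hy0 hyd hbethe hrN, hUOp_fermiBethe hy0 hyd hbethe hrN⟩
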